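/- arXiv:2411.02101 — 2 statements merged into one kernel-verified Lean document; each statement's English description precedes it below -/
import Mathlib

section
/- Let R ⊆ S be an extension of commutative rings, where S is semilocal (S has only finitely many maximal ideals). Then R ⊆ S is strongly local if and only if R ⊆ S is an integral extension that is seminormal and infra-integral (all residual field extensions κ_R(Q ∩ R) → κ_S(Q), for Q a prime ideal of S, are isomorphisms), the extension has FIP (there are only finitely many intermediate rings T with R ⊆ T ⊆ S), and for every maximal ideal M of R with R_M ≠ S_M (i.e., every M ∈ MSupp(S/R), the set of maximal ideals in the support of the R-module S/R) the residue field R/M is isomorphic to Z/2Z (equivalently, R/M has exactly two elements). -/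
/-- A ring extension `R ⊆ S` is *strongly local* if `U(R) = U(S)`. -/
def Subring.IsSLExt {S : Type*} [CommRing S] (R : Subring S) : Prop :=
  ∀ x y : S, x * y = 1 → x ∈ R ∧ y ∈ R

/-!
If `R ⊆ S` is strongly local, then `R` contains every difference of units. By the Chinese remainder
theorem, in a semilocal ring `z` is a difference of units as soon as it is one in each residue
field, and the only obstruction is `z = 1` in a field with two elements. This applies to
`(x ^ 2 - x) * y`, so `S` is Boolean modulo the conductor of `R`, which gives everything except FIP.
It also applies to `s - t` when `s` and `t` lie in the same maximal ideals, so `R` has finite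
additive index in `S`, and FIP follows.

Conversely, let `z` lie in every prime of `S` over the maximal ideal `M` of `R`, and put `A = R[z]`.
Then some `z ^ k` lies in `M A`, the descending chain `R + z ^ n A` becomes stationary, and
Nakayama's lemma gives `u ∉ M` with `u z ^ n A ⊆ R`; seminormality then yields `u z ∈ R`. When
`R/M` has two elements, this applies to `z = x - 1` for every unit `x` of `S`.
-/

namespace SLExtension

theorem natCard_eq_two_iff {K : Type*} [MulZeroOneClass K] [Nontrivial K] :
    Nat.card K = 2 ↔ ∀ b : K, b ≠ 0 → b = 1 :=
  (Nat.card_eq_two_iff' (0 : K)).trans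
    ⟨fun h _ hb => h.unique hb one_ne_zero, fun h => ⟨1, one_ne_zero, h⟩⟩

theorem mem_or_sub_one_mem_of_sq_sub_self_mem {A : Type*} [CommRing A] {P : Ideal A}
    [P.IsPrime] {x : A} (hx : x ^ 2 - x ∈ P) : x ∈ P ∨ x - 1 ∈ P :=
  ‹P.IsPrime›.mem_or_mem (by rwa [mul_sub_one, ← sq])

theorem isUnit_of_forall_notMem {A : Type*} [CommSemiring A] {u : A}
    (hu : ∀ M : MaximalSpectrum A, u ∉ M.asIdeal) : IsUnit u := by
  by_contra h
  obtain ⟨M, hM, huM⟩ := exists_max_ideal_of_mem_nonunits h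
  exact hu ⟨M, hM⟩ huM

theorem exists_isUnit_and_isUnit_sub {A : Type*} [CommRing A] [Finite (MaximalSpectrum A)] {z : A}
    (hz : ∀ M : MaximalSpectrum A, ∃ u, u ∉ M.asIdeal ∧ u - z ∉ M.asIdeal) :
    ∃ u, IsUnit u ∧ IsUnit (u - z) := by
  choose v hv hvz using hz
  obtain ⟨u, hu⟩ := Ideal.exists_forall_sub_mem_ideal
    (fun _ _ hMN => MaximalSpectrum.isCoprime_of_ne hMN) v
  refine ⟨u, isUnit_of_forall_notMem fun M huM => hv M ?_,
    isUnit_of_forall_notMem fun M huM => hvz M ?_⟩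
  · exact (Submodule.sub_mem_iff_right _ huM).1 (hu M)
  · rw [← Submodule.sub_mem_iff_right _ huM, sub_sub_sub_cancel_right]
    exact hu M

theorem mem_of_forall_le_pow_mem {A : Type*} [Monoid A] {T : Set A}
    (hT : ∀ b, b ^ 2 ∈ T → b ^ 3 ∈ T → b ∈ T) {b : A} {n : ℕ} (hb : ∀ k, n ≤ k → b ^ k ∈ T) :
    b ∈ T := by
  induction n with
  | zero => simpa using hb 1 zero_le_one
  | succ n ih =>
    rcases n.eq_zero_or_pos with rfl | hn
    · simpa using hb 1 le_rfl
    · refine ih fun k hk => hT _ ?_ ?_ <;> rw [← pow_mul] <;> exact hb _ (by lia)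

section DescendingChain

variable {R A : Type*} [CommRing R] [CommRing A] [Algebra R A]

theorem exists_forall_restrictScalars_le_one_sup [WellFoundedLT (Subalgebra R A)] {I : ℕ → Ideal A}
    (hI : Antitone I) :
    ∃ n, ∀ m, n ≤ m → (I n).restrictScalars R ≤ 1 ⊔ (I m).restrictScalars R := by
  -- The subalgebra `R + I n`, as the preimage of the image of `R` in `A ⧸ I n`.
  let B (n : ℕ) : Subalgebra R A := (⊥ : Subalgebra R (A ⧸ I n)).comap (Ideal.Quotient.mkₐ R (I n))
  have mem_B {n : ℕ} {a : A} : a ∈ B n ↔ ∃ r : R, a - algebraMap R A r ∈ I n := by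
    simp only [B, Subalgebra.mem_comap, Algebra.mem_bot, Set.mem_range, Ideal.Quotient.mkₐ_eq_mk,
      ← Ideal.Quotient.eq, eq_comm (a := Ideal.Quotient.mk (I n) a)]
    rfl
  have hB : Antitone B := fun m n hmn a ha => by
    obtain ⟨r, hr⟩ := mem_B.1 ha
    exact mem_B.2 ⟨r, hI hmn hr⟩
  obtain ⟨n, hn⟩ := WellFoundedLT.antitone_chain_condition hB
  refine ⟨n, fun m hnm a ha => ?_⟩
  have haB : a ∈ B m := hn m hnm ▸ mem_B.2 ⟨0, by simpa using ha⟩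
  obtain ⟨r, hr⟩ := mem_B.1 haB
  exact Submodule.mem_sup.2 ⟨algebraMap R A r, Submodule.mem_one.2 ⟨r, rfl⟩, _, hr, by ring⟩

theorem exists_forall_mem_pow_smul_mem_one [Module.Finite R A]
    [WellFoundedLT (Subalgebra R A)] {M : Ideal R} {J : Ideal A} (hJ : J.FG)
    (hJM : J ≤ (M.map (algebraMap R A)).radical) :
    ∃ u : R, u - 1 ∈ M ∧ ∃ n, ∀ a ∈ J ^ n, u • a ∈ (1 : Submodule R A) := by
  obtain ⟨k, hk⟩ := Ideal.exists_pow_le_of_le_radical_of_fg hJM hJ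
  obtain ⟨n, hn⟩ := exists_forall_restrictScalars_le_one_sup (R := R) (I := fun n => J ^ n)
    fun _ _ => Ideal.pow_le_pow_right
  have hMJ : (J ^ (k + n)).restrictScalars R ≤ M • (J ^ n).restrictScalars R := by
    rw [← Ideal.smul_restrictScalars, pow_add, smul_eq_mul]
    exact Ideal.mul_mono_left hk
  obtain ⟨u, huM, hu⟩ := Submodule.exists_sub_one_mem_and_smul_le_of_fg_of_le_sup
    (Submodule.FG.restrictScalars (Ideal.FG.pow hJ)) le_rfl
    ((hn (k + n) (Nat.le_add_left n k)).trans (sup_le_sup_left hMJ 1))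
  exact ⟨u, huM, n, fun a ha => hu (Submodule.smul_mem_pointwise_smul a u _ ha)⟩

end DescendingChain

section IntegralAlgebra

variable {R S : Type*} [CommRing R] [CommRing S] [Algebra R S]

theorem mem_radical_map_of_forall_prime_over {A : Type*} [CommRing A] [Algebra R A] [Algebra A S]
    [IsScalarTower R A S] [Algebra.IsIntegral A S] [FaithfulSMul A S] {M : Ideal R} [M.IsMaximal]
    {z : A} (hz : ∀ Q : Ideal S, Q.IsPrime → Q.comap (algebraMap R S) = M → algebraMap A S z ∈ Q) :
    z ∈ (M.map (algebraMap R A)).radical := by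
  rw [Ideal.radical_eq_sInf, Ideal.mem_sInf]
  rintro P ⟨hMP, hP⟩
  obtain ⟨⟨Q, hQ⟩, hQP⟩ := Algebra.IsIntegral.comap_surjective A S ⟨P, hP⟩
  obtain rfl : Q.comap (algebraMap A S) = P := congrArg PrimeSpectrum.asIdeal hQP
  rw [Ideal.map_le_iff_le_comap, Ideal.comap_comap, ← IsScalarTower.algebraMap_eq] at hMP
  exact hz Q hQ (‹M.IsMaximal›.eq_of_le (Ideal.comap_ne_top _ hQ.ne_top) hMP).symm

theorem wellFoundedLT_subalgebra [WellFoundedLT (Subalgebra R S)] (A : Subalgebra R S) :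
    WellFoundedLT (Subalgebra R A) :=
  (Monotone.strictMono_of_injective (fun _ _ h => Subalgebra.map_mono h)
    (Subalgebra.map_injective (f := A.val) Subtype.val_injective)).wellFoundedLT

theorem exists_notMem_smul_mem_one [Algebra.IsIntegral R S] [WellFoundedLT (Subalgebra R S)]
    (hsn : ∀ b : S, b ^ 2 ∈ (1 : Submodule R S) → b ^ 3 ∈ (1 : Submodule R S) →
      b ∈ (1 : Submodule R S))
    {M : Ideal R} [hM : M.IsMaximal] {z : S}
    (hz : ∀ Q : Ideal S, Q.IsPrime → Q.comap (algebraMap R S) = M → z ∈ Q) :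
    ∃ u ∉ M, u • z ∈ (1 : Submodule R S) := by
  let A := Algebra.adjoin R {z}
  let w : A := ⟨z, Algebra.self_mem_adjoin_singleton R z⟩
  have : Module.Finite R A :=
    Module.Finite.iff_fg.2 (Algebra.IsIntegral.isIntegral z).fg_adjoin_singleton
  have : Algebra.IsIntegral A S := Algebra.IsIntegral.tower_top R
  have := wellFoundedLT_subalgebra A
  have hw : w ∈ (M.map (algebraMap R A)).radical := mem_radical_map_of_forall_prime_over hz
  obtain ⟨u, huM, n, hu⟩ := exists_forall_mem_pow_smul_mem_one (Submodule.fg_span_singleton w)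
    ((Ideal.span_singleton_le_iff_mem _).2 hw)
  refine ⟨u, fun h => hM.ne_top ((Ideal.eq_top_iff_one M).2 ?_),
    mem_of_forall_le_pow_mem (T := {b | b ∈ (1 : Submodule R S)}) (n := n + 1) hsn
      fun l hl => ?_⟩
  · exact (Submodule.sub_mem_iff_right M h).1 huM
  obtain ⟨d, rfl⟩ : ∃ d, l = d + 1 := ⟨l - 1, by lia⟩
  have hwl : w ^ (d + 1) ∈ Ideal.span {w} ^ n :=
    Ideal.pow_le_pow_right (by lia) (Ideal.pow_mem_pow (Ideal.mem_span_singleton_self w) _)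
  obtain ⟨r, hr⟩ := Submodule.mem_one.1 (hu _ hwl)
  have hrS : algebraMap R S r = u • z ^ (d + 1) := congrArg A.val hr
  exact Submodule.mem_one.2 ⟨u ^ d * r, by
    rw [smul_pow, pow_succ, mul_smul, ← hrS, map_mul, Algebra.smul_def]⟩

end IntegralAlgebra

variable {S : Type*} [CommRing S] {R : Subring S}

/-- The conductor of `R ⊆ S`: the largest ideal of `S` contained in `R`. -/
def conductorIdeal (R : Subring S) : Ideal S where
  carrier := {c | ∀ y, c * y ∈ R}
  add_mem' ha hb y := by simpa only [add_mul] using R.add_mem (ha y) (hb y)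
  zero_mem' y := by simp
  smul_mem' c a ha y := by simpa only [smul_eq_mul, mul_left_comm, mul_assoc] using ha (c * y)

theorem mem_of_mem_conductorIdeal {c : S} (hc : c ∈ conductorIdeal R) : c ∈ R := by
  simpa only [mul_one] using hc 1

/-- For a prime `Q` of `S`, the extension `R ⊆ S` is infra-integral at `Q` if
`κ_R(Q ∩ R) → κ_S(Q)` is an isomorphism. As field maps are injective, this says that each element
of `S/Q` is a fraction of elements of `R/(Q ∩ R)`, which is how it is encoded. -/
def IsInfraIntegralAt (R : Subring S) (Q : Ideal S) : Prop :=
  ∀ s : S ⧸ Q, ∃ a b : R ⧸ Q.comap R.subtype, b ≠ 0 ∧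
    Ideal.quotientMap Q R.subtype le_rfl b * s = Ideal.quotientMap Q R.subtype le_rfl a

theorem mem_one_submodule_iff {s : S} : s ∈ (1 : Submodule R S) ↔ s ∈ R :=
  Submodule.mem_one.trans ⟨fun ⟨r, hr⟩ => hr ▸ r.2, fun hs => ⟨⟨s, hs⟩, rfl⟩⟩

theorem isSLExt_iff_forall_isUnit_mem : R.IsSLExt ↔ ∀ u : S, IsUnit u → u ∈ R := by
  refine ⟨fun h u hu => ?_, fun h x y hxy => ⟨?_, ?_⟩⟩
  · obtain ⟨v, huv⟩ := hu.exists_right_inv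
    exact (h u v huv).1
  · exact h x (.of_mul_eq_one y hxy)
  · exact h y (.of_mul_eq_one_right x hxy)

theorem isInfraIntegralAt_of_not_conductorIdeal_le {Q : Ideal S} (hQ : ¬ conductorIdeal R ≤ Q) :
    IsInfraIntegralAt R Q := by
  intro s
  obtain ⟨s, rfl⟩ := Ideal.Quotient.mk_surjective s
  obtain ⟨c, hc, hcQ⟩ := SetLike.not_le_iff_exists.1 hQ
  refine ⟨Ideal.Quotient.mk _ ⟨c * s, hc s⟩, Ideal.Quotient.mk _ ⟨c, mem_of_mem_conductorIdeal hc⟩,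
    ?_, ?_⟩
  · rwa [Ne, Ideal.Quotient.eq_zero_iff_mem]
  · rw [Ideal.quotientMap_mk, Ideal.quotientMap_mk, ← map_mul]
    rfl

theorem isIntegral_of_sq_sub_self_mem {x : S} (hx : x ^ 2 - x ∈ R) : IsIntegral R x := by
  let r : R := ⟨x ^ 2 - x, hx⟩
  have hr : algebraMap R S r = x ^ 2 - x := rfl
  exact ⟨Polynomial.X ^ 2 - Polynomial.X - Polynomial.C r, by monicity!, by simp [hr]⟩

theorem isInfraIntegralAt_of_sq_sub_self_mem (hbool : ∀ x : S, x ^ 2 - x ∈ conductorIdeal R)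
    (Q : Ideal S) [Q.IsPrime] : IsInfraIntegralAt R Q := by
  by_cases hQ : conductorIdeal R ≤ Q
  · intro s
    obtain ⟨s, rfl⟩ := Ideal.Quotient.mk_surjective s
    rcases mem_or_sub_one_mem_of_sq_sub_self_mem (hQ (hbool s)) with hs | hs
    · exact ⟨0, 1, one_ne_zero, by
        rw [map_one, one_mul, map_zero, Ideal.Quotient.eq_zero_iff_mem.2 hs]⟩
    · exact ⟨1, 1, one_ne_zero, by
        rw [map_one, one_mul, (Ideal.Quotient.mk_eq_one_iff_sub_mem s).2 hs]⟩
  · exact isInfraIntegralAt_of_not_conductorIdeal_le hQ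

theorem natCard_quotient_eq_two (hbool : ∀ x : S, x ^ 2 - x ∈ conductorIdeal R)
    {M : Ideal R} [M.IsPrime] {s : S} (hs : ∀ u : R, u ∉ M → (u : S) * s ∉ R) :
    Nat.card (R ⧸ M) = 2 := by
  rw [natCard_eq_two_iff]
  intro b hb
  obtain ⟨r, rfl⟩ := Ideal.Quotient.mk_surjective b
  have hr : r ^ 2 - r ∈ M := by
    by_contra h
    exact hs _ h (hbool r s)
  rw [Ne, Ideal.Quotient.eq_zero_iff_mem] at hb
  exact (Ideal.Quotient.mk_eq_one_iff_sub_mem r).2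
    ((mem_or_sub_one_mem_of_sq_sub_self_mem hr).resolve_left hb)

section Semilocal

variable [Finite (MaximalSpectrum S)]

theorem mem_of_forall_exists_notMem (h : R.IsSLExt) {z : S}
    (hz : ∀ M : MaximalSpectrum S, ∃ u, u ∉ M.asIdeal ∧ u - z ∉ M.asIdeal) : z ∈ R := by
  obtain ⟨u, hu, huz⟩ := exists_isUnit_and_isUnit_sub hz
  rw [isSLExt_iff_forall_isUnit_mem] at h
  simpa only [sub_sub_cancel] using R.sub_mem (h u hu) (h _ huz)

theorem sq_sub_self_mem_conductorIdeal (h : R.IsSLExt) (x : S) :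
    x ^ 2 - x ∈ conductorIdeal R := by
  refine fun y => mem_of_forall_exists_notMem h fun M => ?_
  have h1 : (1 : S) ∉ M.asIdeal := M.asIdeal.one_notMem
  by_cases hz : 1 - (x ^ 2 - x) * y ∈ M.asIdeal
  · have hxM : x * (x - 1) ∉ M.asIdeal := fun hx => h1 <| by
      convert M.asIdeal.add_mem hz (M.asIdeal.mul_mem_right y hx) using 1
      ring
    refine ⟨x, fun hx => hxM (M.asIdeal.mul_mem_right _ hx), fun hx => hxM ?_⟩
    convert M.asIdeal.mul_mem_left x (M.asIdeal.sub_mem hx hz) using 1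
    ring
  · exact ⟨1, h1, hz⟩

theorem sub_mem_of_forall_mem_iff (h : R.IsSLExt) {s t : S}
    (hst : ∀ M : MaximalSpectrum S, s ∈ M.asIdeal ↔ t ∈ M.asIdeal) : s - t ∈ R := by
  refine mem_of_forall_exists_notMem h fun M => ?_
  by_cases hs : s ∈ M.asIdeal
  · refine ⟨1, M.asIdeal.one_notMem, fun h1 => M.asIdeal.one_notMem ?_⟩
    exact (Submodule.sub_mem_iff_left _ (M.asIdeal.sub_mem hs ((hst M).1 hs))).1 h1
  · exact ⟨s, hs, by rwa [sub_sub_cancel, ← hst M]⟩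

theorem finite_quotient_of_isSLExt (h : R.IsSLExt) : Finite (S ⧸ R.toAddSubgroup) := by
  refine Finite.of_injective
    (fun q => {M : MaximalSpectrum S | Quotient.out q ∈ M.asIdeal}) fun p q hpq => ?_
  have hpqR : Quotient.out q - Quotient.out p ∈ R :=
    sub_mem_of_forall_mem_iff h fun M => (Set.ext_iff.1 hpq M).symm
  rw [← QuotientAddGroup.out_eq' p, ← QuotientAddGroup.out_eq' q, QuotientAddGroup.eq,
    neg_add_eq_sub]
  exact hpqR

end Semilocal

theorem finite_setOf_le [Finite (S ⧸ R.toAddSubgroup)] : {T : Subring S | R ≤ T}.Finite := by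
  have : Finite {H : AddSubgroup S // R.toAddSubgroup ≤ H} :=
    .of_equiv _ (QuotientAddGroup.comapMk'OrderIso R.toAddSubgroup).toEquiv
  refine Set.finite_coe_iff.1 (.of_injective
    (fun T => (⟨T.1.toAddSubgroup, T.2⟩ : {H : AddSubgroup S // R.toAddSubgroup ≤ H})) ?_)
  exact fun T T' hTT' => Subtype.ext (Subring.toAddSubgroup_injective (congrArg Subtype.val hTT'))

theorem finite_subalgebra (hfip : {T : Subring S | R ≤ T}.Finite) : Finite (Subalgebra R S) :=
  have := hfip.to_subtype
  .of_injective
    (fun B => (⟨B.toSubring, fun r hr => B.algebraMap_mem ⟨r, hr⟩⟩ : {T : Subring S | R ≤ T}))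
    fun _ _ h => Subalgebra.toSubring_injective (congrArg Subtype.val h)

theorem sub_one_mem_of_natCard_quotient_eq_two {Q : Ideal S} (hinf : IsInfraIntegralAt R Q)
    (hcard : Nat.card (R ⧸ Q.comap R.subtype) = 2) {x : S} (hx : x ∉ Q) : x - 1 ∈ Q := by
  have hQ : Q ≠ ⊤ := fun h => hx (h ▸ Submodule.mem_top)
  have : Nontrivial (R ⧸ Q.comap R.subtype) :=
    Ideal.Quotient.nontrivial_iff.2 (Ideal.comap_ne_top _ hQ)
  rw [natCard_eq_two_iff] at hcard
  obtain ⟨a, b, hb, hab⟩ := hinf (Ideal.Quotient.mk Q x)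
  rw [hcard b hb, map_one, one_mul] at hab
  have ha : a ≠ 0 := by
    rintro rfl
    rw [map_zero, Ideal.Quotient.eq_zero_iff_mem] at hab
    exact hx hab
  rw [hcard a ha, map_one] at hab
  exact (Ideal.Quotient.mk_eq_one_iff_sub_mem x).1 hab

theorem mem_of_isUnit [Algebra.IsIntegral R S] [WellFoundedLT (Subalgebra R S)]
    (hsn : ∀ b : S, b ^ 2 ∈ R → b ^ 3 ∈ R → b ∈ R)
    (hinf : ∀ Q : Ideal S, Q.IsPrime → IsInfraIntegralAt R Q)
    (hcard : ∀ M : Ideal R, M.IsMaximal → (∃ s : S, ∀ u : R, u ∉ M → (u : S) * s ∉ R) →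
      Nat.card (R ⧸ M) = 2)
    {x : S} (hx : IsUnit x) : x ∈ R := by
  let D : Ideal R := (1 : Submodule R S).colon {x}
  have mem_D {u : R} : u ∈ D ↔ (u : S) * x ∈ R :=
    Submodule.mem_colon_singleton.trans mem_one_submodule_iff
  by_contra hxR
  obtain ⟨M, hM, hDM⟩ := Ideal.exists_le_maximal D fun hD => hxR <| by
    simpa using mem_D.1 ((Ideal.eq_top_iff_one D).1 hD)
  have hcardM : Nat.card (R ⧸ M) = 2 := hcard M hM ⟨x, fun u hu hux => hu (hDM (mem_D.2 hux))⟩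
  have hx1 (Q : Ideal S) (hQ : Q.IsPrime) (hQM : Q.comap R.subtype = M) : x - 1 ∈ Q :=
    sub_one_mem_of_natCard_quotient_eq_two (hinf Q hQ) (hQM ▸ hcardM)
      fun hxQ => hQ.ne_top (Q.eq_top_of_isUnit_mem hxQ hx)
  obtain ⟨u, huM, hu⟩ :=
    exists_notMem_smul_mem_one (by simpa only [mem_one_submodule_iff] using hsn) hx1
  refine huM (hDM (mem_D.2 ?_))
  have hux : (u : S) * (x - 1) ∈ R := mem_one_submodule_iff.1 hu
  simpa [mul_sub] using R.add_mem hux u.2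

end SLExtension

theorem SL_characterization_semilocal {S : Type*} [CommRing S] (R : Subring S)
    (hS : {M : Ideal S | M.IsMaximal}.Finite) :
    R.IsSLExt ↔
      -- `R ⊆ S` is integral
      ((∀ x : S, IsIntegral R x) ∧
      -- `R ⊆ S` is seminormal
      (∀ b : S, b ^ 2 ∈ R → b ^ 3 ∈ R → b ∈ R) ∧
      -- `R ⊆ S` is infra-integral: all residual field extensions
      -- `κ_R(Q ∩ R) → κ_S(Q)` are isomorphisms; equivalently (the field maps being
      -- injective) every element of `Frac(S/Q)` is a fraction of elements of `R/(Q ∩ R)`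
      (∀ Q : Ideal S, Q.IsPrime → ∀ s : S ⧸ Q,
        ∃ a b : ↥R ⧸ Q.comap R.subtype, b ≠ 0 ∧
          Ideal.quotientMap Q R.subtype le_rfl b * s = Ideal.quotientMap Q R.subtype le_rfl a) ∧
      -- the extension has FIP: finitely many intermediate rings
      {T : Subring S | R ≤ T}.Finite ∧
      -- for every maximal ideal `M ∈ MSupp(S/R)`, i.e. with `R_M ≠ S_M`,
      -- the residue field `R/M` has exactly two elements (`R/M ≅ ℤ/2ℤ`)
      (∀ M : Ideal ↥R, M.IsMaximal →
        (∃ s : S, ∀ u : ↥R, u ∉ M → (u : S) * s ∉ R) →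
        Nat.card (↥R ⧸ M) = 2)) := by
  constructor
  · intro h
    have : Finite {M : Ideal S // M.IsMaximal} := hS.to_subtype
    have : Finite (MaximalSpectrum S) := .of_equiv _ (MaximalSpectrum.equivSubtype S).symm
    have := SLExtension.finite_quotient_of_isSLExt h
    have hbool := SLExtension.sq_sub_self_mem_conductorIdeal h
    have hsq (x : S) : x ^ 2 - x ∈ R := SLExtension.mem_of_mem_conductorIdeal (hbool x)
    exact ⟨fun x => SLExtension.isIntegral_of_sq_sub_self_mem (hsq x),
      fun b hb _ => by simpa only [sub_sub_cancel] using R.sub_mem hb (hsq b),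
      fun Q _ => SLExtension.isInfraIntegralAt_of_sq_sub_self_mem hbool Q,
      SLExtension.finite_setOf_le,
      fun _ _ ⟨_, hs⟩ => SLExtension.natCard_quotient_eq_two hbool hs⟩
  · rintro ⟨hint, hsn, hinf, hfip, hcard⟩
    have : Algebra.IsIntegral R S := ⟨hint⟩
    have := SLExtension.finite_subalgebra hfip
    exact SLExtension.isSLExt_iff_forall_isUnit_mem.2 fun _ =>
      SLExtension.mem_of_isUnit hsn hinf hcard
end

section
/- Let R ⊆ S be an FCP extension of commutative rings (every chain of intermediate rings between R and S is finite) with S semilocal (S has only finitely many maximal ideals). Then there exists a greatest intermediate ring T with R ⊆ T ⊆ S such that R ⊆ T is strongly local; that is, R ⊆ T is strongly local and every intermediate ring V with R ⊆ V ⊆ S for which R ⊆ V is strongly local satisfies V ⊆ T. -/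
/-- For subrings `R ≤ T` of `S`, the extension `R ⊆ T` is *strongly local* if
`U(R) = U(T)`: every unit of `T` lies in `R` together with its inverse. -/
def Subring.IsSLWithin {S : Type*} [CommRing S] (R T : Subring S) : Prop :=
  ∀ x y : S, x ∈ T → y ∈ T → x * y = 1 → x ∈ R ∧ y ∈ R

/-!
If `V / (R : V)` is a Boolean ring, then `R ⊆ V` is strongly local: for `x y = 1` in `V` we have
`x - 1 = y (x² - x) ∈ R`. The converse holds when `V` is semilocal: `v (x² - x)` lies in every
maximal ideal of `V` with residue field `𝔽₂`, so by the Chinese remainder theorem it is a difference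
of two units of `V`, and these belong to `R`.

Let `I` be the ideal of `R` generated by all `r² - r`. The elements `x` with `x I ⊆ I` and
`x² - x ∈ I` form a ring, being the elements of `(I : I)` fixed by Frobenius modulo `I ∋ 2`. It is
the greatest `V` for which `V / (R : V)` is Boolean.

It remains to see that `S` semilocal forces every intermediate ring `V` to be semilocal. All but
finitely many maximal ideals `M` of `V` satisfy `M S = S`. For a finite set `F` of maximal ideals,
let `C` be the ring of all `b ∈ S` with `s b ∈ V` for some `s ∉ ⋃ F`, and choose `F` with `C`
minimal. If `M ∉ F` and `M S = S`, take `x ∈ M \ ⋃ F`. Since `x b ∈ C` forces `b ∈ C`, stability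
of the chain of rings `C + xⁿ S` gives `S = C + x S`, and then `M C = C`. By minimality, however,
every element of `C` has a denominator outside `M`, so `1 ∈ M C` would put an element outside `M`
into `M`.
-/

theorem isWF_of_forall_isChain_finite {α : Type*} [Preorder α] {s : Set α}
    (h : ∀ C ⊆ s, IsChain (· ≤ ·) C → C.Finite) : s.IsWF := by
  refine Set.isWF_iff_no_descending_seq.2 fun f hf hfs ↦ ?_
  exact Set.infinite_range_of_injective hf.injective
    (h _ (Set.range_subset_iff.2 hfs) hf.antitone.isChain_range)

section Semilocal

theorem isUnit_of_forall_notMem_maximal {A : Type*} [CommSemiring A] {a : A}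
    (h : ∀ M : MaximalSpectrum A, a ∉ M.asIdeal) : IsUnit a := by
  by_contra ha
  obtain ⟨M, hM, haM⟩ := exists_max_ideal_of_mem_nonunits ha
  exact h ⟨M, hM⟩ haM

theorem finite_setOf_map_ne_top {A B : Type*} [CommSemiring A] [CommSemiring B] [Algebra A B]
    [Finite (MaximalSpectrum B)] :
    {M : MaximalSpectrum A | M.asIdeal.map (algebraMap A B) ≠ ⊤}.Finite := by
  refine Set.Finite.of_finite_image ?_ (fun M _ N _ h ↦ MaximalSpectrum.ext h)
  refine (Set.finite_range fun N : MaximalSpectrum B ↦ N.asIdeal.comap (algebraMap A B)).subset ?_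
  rintro _ ⟨M, hM, rfl⟩
  obtain ⟨N, hN, hMN⟩ := Ideal.exists_le_maximal _ hM
  exact ⟨⟨N, hN⟩, (M.isMaximal.eq_of_le (Ideal.comap_ne_top _ hN.ne_top)
    (Ideal.map_le_iff_le_comap.1 hMN)).symm⟩

variable {A : Type*} [CommRing A]

theorem exists_mem_forall_notMem_of_notMem {M : MaximalSpectrum A} {F : Finset (MaximalSpectrum A)}
    (hM : M ∉ F) : ∃ x ∈ M.asIdeal, ∀ N ∈ F, x ∉ N.asIdeal := by
  by_contra! h
  obtain ⟨N, hN, hMN⟩ := (Ideal.subset_union_prime (f := MaximalSpectrum.asIdeal) M M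
    fun N _ _ _ ↦ N.isMaximal.isPrime).1 fun x hx ↦ by simpa using h x hx
  exact hM (MaximalSpectrum.ext (M.isMaximal.eq_of_le N.isMaximal.ne_top hMN) ▸ hN)

variable [Finite (MaximalSpectrum A)]

theorem exists_isUnit_and_isUnit_add {z : A}
    (h : ∀ M : MaximalSpectrum A, ∃ u, u ∉ M.asIdeal ∧ u + z ∉ M.asIdeal) :
    ∃ u, IsUnit u ∧ IsUnit (u + z) := by
  choose w hw hwz using h
  obtain ⟨u, hu⟩ := Ideal.exists_forall_sub_mem_ideal
    (I := MaximalSpectrum.asIdeal) (fun _ _ ↦ MaximalSpectrum.isCoprime_of_ne) w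
  refine ⟨u, isUnit_of_forall_notMem_maximal fun M huM ↦ hw M ?_,
    isUnit_of_forall_notMem_maximal fun M huM ↦ hwz M ?_⟩
  · simpa using M.asIdeal.sub_mem huM (hu M)
  · simpa [add_comm (w M)] using M.asIdeal.sub_mem huM (hu M)

theorem exists_isUnit_and_isUnit_add_mul_sq_sub (v x : A) :
    ∃ u, IsUnit u ∧ IsUnit (u + v * (x ^ 2 - x)) := by
  refine exists_isUnit_and_isUnit_add fun M ↦ ?_
  by_cases hz : v * (x ^ 2 - x) ∈ M.asIdeal
  · have h_one : (1 : A) ∉ M.asIdeal := M.asIdeal.ne_top_iff_one.1 M.isMaximal.ne_top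
    exact ⟨1, h_one, fun h ↦ h_one ((M.asIdeal.add_mem_iff_left hz).1 h)⟩
  · have hx : x ∉ M.asIdeal := fun hx ↦
      hz (M.asIdeal.mul_mem_left v (M.asIdeal.sub_mem (M.asIdeal.pow_mem_of_mem hx 2 two_pos) hx))
    have hx_sub : x - 1 ∉ M.asIdeal := fun hx ↦
      hz (by convert M.asIdeal.mul_mem_left (v * x) hx using 1; ring)
    have h_mul : ∀ y ∉ M.asIdeal, -(v * (x ^ 2 - x) * y) ∉ M.asIdeal := fun y hy h ↦
      (M.isMaximal.isPrime.mem_or_mem (neg_mem_iff.1 h)).elim hz hy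
    refine ⟨_, h_mul x hx, ?_⟩
    convert h_mul (x - 1) hx_sub using 1
    ring_nf

end Semilocal

section BooleanHull

variable {S : Type*} [CommRing S] {R V : Subring S}

/-- The extension `R ⊆ V` is *Boolean modulo its conductor*: `V / (R : V)` is a Boolean ring, that
is, `x² - x` lies in the conductor `(R : V) = {c | c V ⊆ R}` for every `x ∈ V`. -/
def IsBooleanModConductor (R V : Subring S) : Prop :=
  ∀ v ∈ V, ∀ x ∈ V, v * (x ^ 2 - x) ∈ R

theorem IsBooleanModConductor.isSLWithin (h : IsBooleanModConductor R V) : R.IsSLWithin V := by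
  have mem_of_mul_eq_one : ∀ x y : S, x ∈ V → y ∈ V → x * y = 1 → x ∈ R := by
    intro x y hx hy hxy
    have hx_eq : x = 1 + y * (x ^ 2 - x) := by linear_combination (1 - x) * hxy
    rw [hx_eq]
    exact R.add_mem R.one_mem (h y hy x hx)
  exact fun x y hx hy hxy ↦
    ⟨mem_of_mul_eq_one x y hx hy hxy, mem_of_mul_eq_one y x hy hx (mul_comm y x ▸ hxy)⟩

theorem mem_of_isSLWithin_of_isUnit (h : R.IsSLWithin V) {v : V} (hv : IsUnit v) : (v : S) ∈ R := by
  obtain ⟨w, hw⟩ := hv.exists_right_inv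
  exact (h v w v.2 w.2 (congrArg Subtype.val hw)).1

theorem isBooleanModConductor_of_isSLWithin [Finite (MaximalSpectrum V)] (h : R.IsSLWithin V) :
    IsBooleanModConductor R V := by
  intro v hv x hx
  obtain ⟨u, hu, huz⟩ :=
    exists_isUnit_and_isUnit_add_mul_sq_sub (⟨v, hv⟩ : V) ⟨x, hx⟩
  simpa using R.sub_mem (mem_of_isSLWithin_of_isUnit h huz) (mem_of_isSLWithin_of_isUnit h hu)

/-- The ideal of `R` generated by all `r² - r`, the least ideal with Boolean quotient, encoded as an
`R`-submodule of the ambient ring `S`. -/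
def booleanIdeal (R : Subring S) : Submodule R S :=
  Submodule.span R (Set.range fun r : R ↦ (r : S) ^ 2 - r)

theorem booleanIdeal.sq_sub_mem {r : S} (hr : r ∈ R) : r ^ 2 - r ∈ booleanIdeal R :=
  Submodule.subset_span ⟨⟨r, hr⟩, rfl⟩

theorem booleanIdeal.mul_mem_left {r a : S} (hr : r ∈ R) (ha : a ∈ booleanIdeal R) :
    r * a ∈ booleanIdeal R :=
  (booleanIdeal R).smul_mem ⟨r, hr⟩ ha

theorem booleanIdeal.mem_of_mem {a : S} (ha : a ∈ booleanIdeal R) : a ∈ R := by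
  induction ha using Submodule.span_induction with
  | mem _ h =>
    obtain ⟨r, rfl⟩ := h
    exact R.sub_mem (R.pow_mem r.2 2) r.2
  | zero => exact R.zero_mem
  | add _ _ _ _ hx hy => exact R.add_mem hx hy
  | smul r _ _ hx => exact R.mul_mem r.2 hx

theorem booleanIdeal.two_mem (R : Subring S) : (2 : S) ∈ booleanIdeal R := by
  have h := booleanIdeal.sq_sub_mem (natCast_mem R 2)
  norm_num at h
  exact h

/-- The greatest subring `V ≥ R` of `S` that is Boolean modulo its conductor into `R`: the
elements that multiply `I = booleanIdeal R` into itself and are idempotent modulo `I`. -/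
def booleanHull (R : Subring S) : Subring S where
  carrier := {x | (∀ a ∈ booleanIdeal R, x * a ∈ booleanIdeal R) ∧ x ^ 2 - x ∈ booleanIdeal R}
  zero_mem' := by simp
  one_mem' := by simp
  add_mem' := by
    rintro x y ⟨hxI, hx⟩ ⟨hyI, hy⟩
    refine ⟨fun a ha ↦ ?_, ?_⟩
    · rw [add_mul]
      exact add_mem (hxI a ha) (hyI a ha)
    · convert add_mem (add_mem hx hy) (hxI _ (hyI _ (booleanIdeal.two_mem R))) using 1
      ring
  neg_mem' := by
    rintro x ⟨hxI, hx⟩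
    refine ⟨fun a ha ↦ ?_, ?_⟩
    · rw [neg_mul]
      exact neg_mem (hxI a ha)
    · convert add_mem hx (hxI _ (booleanIdeal.two_mem R)) using 1
      ring
  mul_mem' := by
    rintro x y ⟨hxI, hx⟩ ⟨hyI, hy⟩
    refine ⟨fun a ha ↦ ?_, ?_⟩
    · rw [mul_assoc]
      exact hxI _ (hyI a ha)
    · convert add_mem (hyI _ (hyI _ hx)) (hxI _ hy) using 1
      ring

theorem le_booleanHull (R : Subring S) : R ≤ booleanHull R :=
  fun _ hr ↦ ⟨fun _ ↦ booleanIdeal.mul_mem_left hr, booleanIdeal.sq_sub_mem hr⟩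

theorem isBooleanModConductor_booleanHull (R : Subring S) :
    IsBooleanModConductor R (booleanHull R) :=
  fun _ hv _ hx ↦ booleanIdeal.mem_of_mem (hv.1 _ hx.2)

theorem IsBooleanModConductor.mul_mem (h : IsBooleanModConductor R V) (hRV : R ≤ V) {v a : S}
    (hv : v ∈ V) (ha : a ∈ booleanIdeal R) : v * a ∈ R := by
  induction ha using Submodule.span_induction generalizing v with
  | mem _ ha =>
    obtain ⟨r, rfl⟩ := ha
    exact h v hv r (hRV r.2)
  | zero => simp
  | add _ _ _ _ hx hy => simpa only [mul_add] using R.add_mem (hx hv) (hy hv)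
  | smul r _ _ hx =>
    simpa only [Subring.smul_def, smul_eq_mul, mul_assoc] using hx (V.mul_mem hv (hRV r.2))

theorem IsBooleanModConductor.mul_mem_booleanIdeal (h : IsBooleanModConductor R V) (hRV : R ≤ V)
    {v a : S} (hv : v ∈ V) (ha : a ∈ booleanIdeal R) : v * a ∈ booleanIdeal R := by
  have h_sq : v ^ 2 * a * a ∈ booleanIdeal R :=
    booleanIdeal.mul_mem_left (h.mul_mem hRV (V.pow_mem hv 2) ha) ha
  convert sub_mem h_sq (booleanIdeal.sq_sub_mem (h.mul_mem hRV hv ha)) using 1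
  ring

theorem IsBooleanModConductor.sq_sub_mem_booleanIdeal (h : IsBooleanModConductor R V)
    (hRV : R ≤ V) {v : S} (hv : v ∈ V) : v ^ 2 - v ∈ booleanIdeal R := by
  set z := v ^ 2 - v with hz
  have hzR : z ∈ R := by simpa using h 1 V.one_mem v hv
  have hz_sq : z ^ 2 - z ∈ booleanIdeal R := booleanIdeal.sq_sub_mem hzR
  have hvz_sq : (v * z) ^ 2 - v * z ∈ booleanIdeal R :=
    booleanIdeal.sq_sub_mem (h v hv v hv)
  have hv_sq : v ^ 2 * (z ^ 2 - z) ∈ booleanIdeal R :=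
    h.mul_mem_booleanIdeal hRV (V.pow_mem hv 2) hz_sq
  have hz_eq : z = (v * z) ^ 2 - v * z - v ^ 2 * (z ^ 2 - z) - (z ^ 2 - z) := by
    rw [hz]
    ring
  rw [hz_eq]
  exact sub_mem (sub_mem hvz_sq hv_sq) hz_sq

theorem IsBooleanModConductor.le_booleanHull (h : IsBooleanModConductor R V) (hRV : R ≤ V) :
    V ≤ booleanHull R :=
  fun _ hv ↦ ⟨fun _ ↦ h.mul_mem_booleanIdeal hRV hv, h.sq_sub_mem_booleanIdeal hRV hv⟩

end BooleanHull

section Descent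

open scoped Pointwise

variable {A B : Type*} [CommRing A] [CommRing B] [Algebra A B]

/-- The saturation of `A` in `B` at a submonoid `N` of `A`: the preimage of the localization
`N⁻¹A` under `B → N⁻¹B`. -/
def saturation (B : Type*) [CommRing B] [Algebra A B] (N : Submonoid A) : Subalgebra A B where
  carrier := {b | ∃ s ∈ N, s • b ∈ (⊥ : Subalgebra A B)}
  algebraMap_mem' a := ⟨1, N.one_mem, by simp⟩
  add_mem' := by
    rintro b c ⟨s, hs, hsb⟩ ⟨t, ht, htc⟩
    refine ⟨s * t, N.mul_mem hs ht, ?_⟩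
    convert add_mem (Subalgebra.smul_mem _ hsb t) (Subalgebra.smul_mem _ htc s) using 1
    simp only [Algebra.smul_def, map_mul]
    ring
  mul_mem' := by
    rintro b c ⟨s, hs, hsb⟩ ⟨t, ht, htc⟩
    refine ⟨s * t, N.mul_mem hs ht, ?_⟩
    simpa only [smul_mul_smul_comm] using mul_mem hsb htc

theorem saturation_mono : Monotone (saturation B : Submonoid A → Subalgebra A B) :=
  fun _ _ h _ ⟨s, hs, hsb⟩ ↦ ⟨s, h hs, hsb⟩

theorem mem_saturation_of_smul_mem {N : Submonoid A} {s : A} {b : B} (hs : s ∈ N)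
    (hb : s • b ∈ saturation B N) : b ∈ saturation B N := by
  obtain ⟨t, ht, htb⟩ := hb
  exact ⟨t * s, N.mul_mem ht hs, by rwa [mul_smul]⟩

theorem exists_smul_eq_algebraMap_of_mem_smul {N : Submonoid A} {I : Ideal A} {C : Subalgebra A B}
    (hC : C ≤ saturation B N) {b : B} (hb : b ∈ I • Subalgebra.toSubmodule C) :
    ∃ s ∈ N, ∃ a ∈ I, s • b = algebraMap A B a := by
  induction hb using Submodule.smul_induction_on' with
  | smul a ha c hc =>
    obtain ⟨s, hs, hsc⟩ := hC hc
    obtain ⟨d, hd⟩ := Algebra.mem_bot.1 hsc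
    exact ⟨s, hs, a * d, I.mul_mem_right d ha, by rw [smul_comm, ← hd, map_mul, Algebra.smul_def]⟩
  | add b _ c _ hb hc =>
    obtain ⟨s, hs, a, ha, hsb⟩ := hb
    obtain ⟨t, ht, d, hd, htc⟩ := hc
    refine ⟨s * t, N.mul_mem hs ht, t * a + s * d,
      I.add_mem (I.mul_mem_left t ha) (I.mul_mem_left s hd), ?_⟩
    simp only [map_add, map_mul, ← hsb, ← htc, Algebra.smul_def]
    ring

theorem one_notMem_smul_of_le_saturation_primeCompl [FaithfulSMul A B] {P : Ideal A} [P.IsPrime]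
    {C : Subalgebra A B} (hC : C ≤ saturation B P.primeCompl) :
    (1 : B) ∉ P • Subalgebra.toSubmodule C := by
  intro h
  obtain ⟨s, hs, p, hp, hsp⟩ := exists_smul_eq_algebraMap_of_mem_smul hC h
  rw [← Algebra.algebraMap_eq_smul_one] at hsp
  exact hs (FaithfulSMul.algebraMap_injective A B hsp ▸ hp)

/-- The subalgebra `C + J` spanned by a subalgebra `C` and an ideal `J` of `B`. -/
def addIdeal (C : Subalgebra A B) (J : Ideal B) : Subalgebra A B :=
  (C.map (Ideal.Quotient.mkₐ A J)).comap (Ideal.Quotient.mkₐ A J)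

theorem mem_addIdeal {C : Subalgebra A B} {J : Ideal B} {b : B} :
    b ∈ addIdeal C J ↔ ∃ c ∈ C, b - c ∈ J := by
  simp only [addIdeal, Subalgebra.mem_comap, Subalgebra.mem_map, Ideal.Quotient.mkₐ_eq_mk,
    eq_comm, Ideal.Quotient.eq]

theorem addIdeal_mono (C : Subalgebra A B) : Monotone (addIdeal C) :=
  fun _ _ h _ hb ↦
    let ⟨c, hc, hbc⟩ := mem_addIdeal.1 hb
    mem_addIdeal.2 ⟨c, hc, h hbc⟩

section DescendingChain

variable [WellFoundedLT (Subalgebra A B)]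

theorem addIdeal_span_singleton_eq_top {C : Subalgebra A B} {x : B}
    (hx : ∀ b, x * b ∈ C → b ∈ C) : addIdeal C (Ideal.span {x}) = ⊤ := by
  have h_anti : Antitone fun k ↦ addIdeal C (Ideal.span {x} ^ k) :=
    fun _ _ h ↦ addIdeal_mono C (Ideal.pow_le_pow_right h)
  obtain ⟨n, hn⟩ := WellFoundedLT.antitone_chain_condition h_anti
  have hx_pow : ∀ k b, x ^ k * b ∈ C → b ∈ C := by
    intro k
    induction k with
    | zero => simp
    | succ k ih => exact fun b hb ↦ hx b (ih _ (by rwa [← mul_assoc, ← pow_succ]))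
  refine eq_top_iff.2 fun b _ ↦ mem_addIdeal.2 ?_
  have hb : x ^ n * b ∈ addIdeal C (Ideal.span {x} ^ (n + 1)) := by
    rw [← hn (n + 1) n.le_succ, mem_addIdeal]
    exact ⟨0, C.zero_mem, by simp [Ideal.span_singleton_pow, Ideal.mem_span_singleton]⟩
  obtain ⟨c, hc, hbc⟩ := mem_addIdeal.1 hb
  rw [Ideal.span_singleton_pow, Ideal.mem_span_singleton] at hbc
  obtain ⟨t, ht⟩ := hbc
  refine ⟨b - x * t, hx_pow n _ ?_, Ideal.mem_span_singleton.2 ⟨t, by ring⟩⟩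
  convert hc using 1
  linear_combination ht

theorem one_mem_smul_of_map_eq_top {I : Ideal A} {C : Subalgebra A B} {x : A} (hxI : x ∈ I)
    (hx : ∀ b : B, x • b ∈ C → b ∈ C) (hI : I.map (algebraMap A B) = ⊤) :
    (1 : B) ∈ I • Subalgebra.toSubmodule C := by
  have h_sup : Subalgebra.toSubmodule C ⊔ x • ⊤ = (⊤ : Submodule A B) := by
    refine eq_top_iff.2 fun b _ ↦ ?_
    have hb : b ∈ addIdeal C (Ideal.span {algebraMap A B x}) := by
      rw [addIdeal_span_singleton_eq_top (by simpa only [Algebra.smul_def] using hx)]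
      trivial
    obtain ⟨c, hc, hbc⟩ := mem_addIdeal.1 hb
    obtain ⟨t, ht⟩ := Ideal.mem_span_singleton.1 hbc
    rw [← Algebra.smul_def] at ht
    exact Submodule.mem_sup.2 ⟨c, hc, x • t, Submodule.smul_mem_pointwise_smul t x ⊤ trivial, by
      rw [← ht, add_sub_cancel]⟩
  have h_one : (1 : B) ∈ I • Subalgebra.toSubmodule C ⊔ I • x • (⊤ : Submodule A B) := by
    rw [← Submodule.smul_sup, h_sup, Ideal.smul_top_eq_map, hI]
    trivial
  obtain ⟨m, hm, y, hy, hmy⟩ := Submodule.mem_sup.1 h_one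
  obtain ⟨t, -, rfl⟩ :=
    (Submodule.mem_smul_pointwise_iff_exists _ _ _).1 (Submodule.smul_le_right hy)
  have ht : t ∈ C := hx t (by
    rw [← eq_sub_iff_add_eq'] at hmy
    rw [hmy]
    exact sub_mem C.one_mem (Submodule.smul_le_right hm))
  rw [← hmy]
  exact add_mem hm (Submodule.smul_mem_smul hxI ht)

variable (B) in
theorem finite_setOf_map_eq_top [FaithfulSMul A B] :
    {M : MaximalSpectrum A | M.asIdeal.map (algebraMap A B) = ⊤}.Finite := by
  classical
  let avoid (F : Finset (MaximalSpectrum A)) : Submonoid A := ⨅ M ∈ F, M.asIdeal.primeCompl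
  obtain ⟨F, -, hF⟩ :=
    exists_minimalFor_of_wellFoundedLT (fun _ ↦ True) (fun F ↦ saturation B (avoid F)) ⟨∅, trivial⟩
  refine F.finite_toSet.subset fun M (hM : M.asIdeal.map _ = ⊤) ↦ ?_
  by_contra hMF
  obtain ⟨x, hxM, hxF⟩ := exists_mem_forall_notMem_of_notMem hMF
  have hx_avoid : x ∈ avoid F := by simpa [avoid, Submonoid.mem_iInf] using hxF
  have h_insert : avoid (insert M F) ≤ avoid F :=
    biInf_mono fun N ↦ Finset.mem_insert_of_mem
  have h_le : saturation B (avoid F) ≤ saturation B M.asIdeal.primeCompl :=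
    (hF trivial (saturation_mono h_insert)).trans
      (saturation_mono (iInf₂_le M (Finset.mem_insert_self M F)))
  exact one_notMem_smul_of_le_saturation_primeCompl h_le
    (one_mem_smul_of_map_eq_top hxM (fun _ ↦ mem_saturation_of_smul_mem hx_avoid) hM)

end DescendingChain

variable (A B) in
theorem finite_maximalSpectrum_of_wellFoundedLT_subalgebra [FaithfulSMul A B]
    [WellFoundedLT (Subalgebra A B)] [Finite (MaximalSpectrum B)] : Finite (MaximalSpectrum A) := by
  rw [← Set.finite_univ_iff]
  exact ((finite_setOf_map_eq_top B).union finite_setOf_map_ne_top).subset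
    fun M _ ↦ em (M.asIdeal.map (algebraMap A B) = ⊤)

end Descent

theorem wellFoundedLT_subalgebra_of_isWF_Ici {S : Type*} [CommRing S] {R V : Subring S}
    (hR : (Set.Ici R).IsWF) (hRV : R ≤ V) : WellFoundedLT (Subalgebra V S) := by
  have : WellFoundedLT (Set.Ici R) := ⟨hR⟩
  have hR_le (C : Subalgebra V S) : R ≤ C.toSubring :=
    fun r hr ↦ C.algebraMap_mem ⟨r, hRV hr⟩
  let f (C : Subalgebra V S) : Set.Ici R := ⟨C.toSubring, hR_le C⟩
  have hf : StrictMono f := fun _ _ h ↦ h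
  exact hf.wellFoundedLT

theorem exists_greatest_SL_subextension_general {S : Type*} [CommRing S] (R : Subring S)
    (hR : (Set.Ici R).IsWF) [Finite (MaximalSpectrum S)] :
    ∃ T : Subring S, R ≤ T ∧ R.IsSLWithin T ∧
      ∀ V : Subring S, R ≤ V → R.IsSLWithin V → V ≤ T := by
  refine ⟨booleanHull R, le_booleanHull R, (isBooleanModConductor_booleanHull R).isSLWithin,
    fun V hRV hV ↦ ?_⟩
  have := wellFoundedLT_subalgebra_of_isWF_Ici hR hRV
  have := finite_maximalSpectrum_of_wellFoundedLT_subalgebra V S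
  exact (isBooleanModConductor_of_isSLWithin hV).le_booleanHull hRV

theorem exists_greatest_SL_subextension {S : Type*} [CommRing S] (R : Subring S)
    -- FCP: every chain of intermediate rings between `R` and `S` is finite
    (hFCP : ∀ C : Set (Subring S), (∀ T ∈ C, R ≤ T) → IsChain (· ≤ ·) C → C.Finite)
    -- `S` is semilocal
    (hS : {M : Ideal S | M.IsMaximal}.Finite) :
    ∃ T : Subring S, R ≤ T ∧ R.IsSLWithin T ∧
      ∀ V : Subring S, R ≤ V → R.IsSLWithin V → V ≤ T := by
  have : Finite (MaximalSpectrum S) := (MaximalSpectrum.equivSubtype S).finite_iff.2 hS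
  exact exists_greatest_SL_subextension_general R (isWF_of_forall_isChain_finite hFCP)
end
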